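/- Let P₁ < ⋯ < P_K be an ℓ-dense sequence defining an n-player stingy quantum race (n ≥ 2) with 4enℓ ≤ K, where e is Euler's number. Let T* be the starting point of the coinciding equilibrium. Then 1/(2en) ≤ P_{T*−1} < 1/n. -/

import Mathlib

open Finset

lemma aux_tele (f : ℕ → ℝ) (T K : ℕ) (h : T ≤ K) :
    ∑ i ∈ Finset.Icc (T+1) K, (f (i-1) - f i) = f T - f K := by
  induction K, h using Nat.le_induction with
  | base => simp
  | succ k hk ih =>
    rw [Finset.sum_Icc_succ_top (by omega), ih]
    simp

lemma aux_pow (m : ℕ) (x y : ℝ) (hy : 0 < y) (h : y ≤ x) :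
    ((m:ℝ)+1) * y^m * (x - y) ≤ x^(m+1) - y^(m+1) := by
  induction m with
  | zero => simp
  | succ m ih =>
    have h1 : 0 ≤ x^(m+1) - y^(m+1) := sub_nonneg.2 (pow_le_pow_left₀ hy.le h _)
    have h2 := mul_le_mul_of_nonneg_left ih hy.le
    have h3 := mul_le_mul_of_nonneg_right h h1
    push_cast
    have e1 : ((m:ℝ)+1+1) * y^(m+1) * (x-y) = y * (((m:ℝ)+1) * y^m * (x-y)) + y^(m+1)*(x-y) := by ring
    have e2 : x^(m+1+1) - y^(m+1+1) = x * (x^(m+1) - y^(m+1)) + y^(m+1)*(x-y) := by ring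
    rw [e1, e2]; linarith

lemma aux_exp (m : ℕ) (hm : 1 ≤ m) (c : ℝ) (hc : c ≤ 1/((m:ℝ)+1)) :
    1 ≤ Real.exp 1 * (1-c)^m := by
  have hm' : (0:ℝ) < m := by exact_mod_cast hm
  have h1 : Real.exp (-(1/(m:ℝ))) ≤ 1 - c := by
    have h := Real.add_one_le_exp (1/(m:ℝ))
    rw [Real.exp_neg]
    have : (Real.exp (1/(m:ℝ)))⁻¹ ≤ (1/(m:ℝ)+1)⁻¹ := inv_anti₀ (by positivity) h
    have e : (1/(m:ℝ)+1)⁻¹ = 1 - 1/((m:ℝ)+1) := by field_simp; ring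
    linarith
  have h2 := pow_le_pow_left₀ (Real.exp_pos _).le h1 m
  rw [← Real.exp_nat_mul] at h2
  have e : (m:ℝ) * -(1/(m:ℝ)) = -1 := by field_simp
  rw [e] at h2
  have h3 := mul_le_mul_of_nonneg_left h2 (Real.exp_pos 1).le
  rwa [← Real.exp_add, add_neg_cancel, Real.exp_zero] at h3

set_option maxHeartbeats 1000000 in
theorem stmt_18 (n K : ℕ) (ℓ : ℝ) (P q r : ℕ → ℝ) (Tstar : ℕ)
    (hn : 2 ≤ n) (hK : 2 ≤ K)
    (hP1 : 0 < P 1) (hPK : P K ≤ 1)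
    (hPmono : ∀ i j, 1 ≤ i → i < j → j ≤ K → P i < P j)
    (hℓ : 0 < ℓ)
    (hdense1 : P 1 ≤ ℓ / K)
    (hdense2 : P K ≥ 1 - ℓ / K)
    (hdense3 : ∀ i, 1 ≤ i → i ≤ K - 1 → P (i+1) - P i ≤ ℓ / K)
    (hKbig : 4 * Real.exp 1 * n * ℓ ≤ (K : ℝ))
    (hq : ∀ i, q i = (1 / P i) *
      ((P (i-1)) ^ (-(1:ℝ)/((n:ℝ)-1)) - (P i) ^ (-(1:ℝ)/((n:ℝ)-1))))
    (hr : ∀ T, r T = (1 / (1 - P T)) *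
      ((P K) ^ (-(1:ℝ)/((n:ℝ)-1)) - ∑ i ∈ Finset.Icc (T+1) K, (1 - P i) * q i))
    (hT1 : 1 ≤ Tstar) (hT2 : Tstar ≤ K) (hT3 : 0 < r Tstar)
    (hT4 : ∀ T, 1 ≤ T → T < Tstar → r T ≤ 0) :
    1 / (2 * Real.exp 1 * n) ≤ P (Tstar - 1) ∧ P (Tstar - 1) < 1 / n := by
  obtain ⟨m, rfl⟩ : ∃ m, n = m + 1 := ⟨n - 1, by omega⟩
  have hm : 1 ≤ m := by omega
  have hm' : (1:ℝ) ≤ m := by exact_mod_cast hm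
  have hK0 : (0:ℝ) < K := by exact_mod_cast (by omega : 0 < K)
  push_cast at *
  obtain ⟨X, hX⟩ : ∃ X : ℕ → ℝ, ∀ i, X i = P i ^ (-(1:ℝ)/((m:ℝ)+1-1)) := ⟨_, fun _ => rfl⟩
  simp only [← hX] at hq hr
  have hPle : ∀ i j, 1 ≤ i → i ≤ j → j ≤ K → P i ≤ P j := by
    intro i j h1 h2 h3
    rcases h2.eq_or_lt with rfl | h
    · exact le_rfl
    · exact (hPmono i j h1 h h3).le
  have hPpos : ∀ i, 1 ≤ i → i ≤ K → 0 < P i := fun i h1 h2 =>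
    hP1.trans_le (hPle 1 i le_rfl h1 h2)
  have hXpos : ∀ i, 1 ≤ i → i ≤ K → 0 < X i := fun i h1 h2 => by
    rw [hX]; exact Real.rpow_pos_of_pos (hPpos i h1 h2) _
  have hXpow : ∀ i, 1 ≤ i → i ≤ K → X i ^ m = 1 / P i := fun i h1 h2 => by
    rw [hX, ← Real.rpow_natCast, ← Real.rpow_mul (hPpos i h1 h2).le]
    have : (-(1:ℝ)/((m:ℝ)+1-1)) * m = -1 := by
      rw [add_sub_cancel_right]; field_simp
    rw [this, Real.rpow_neg_one, one_div]
  have hXanti : ∀ i j, 1 ≤ i → i ≤ j → j ≤ K → X j ≤ X i := by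
    intro i j h1 h2 h3
    by_contra! hc
    have h := pow_lt_pow_left₀ hc (hXpos i h1 (h2.trans h3)).le (by omega : m ≠ 0)
    rw [hXpow i h1 (h2.trans h3), hXpow j (h1.trans h2) h3] at h
    exact absurd h (not_lt.2 (one_div_le_one_div_of_le (hPpos i h1 (h2.trans h3)) (hPle i j h1 h2 h3)))
  have hS : ∀ T, 1 ≤ T → T ≤ K → X K - ∑ i ∈ Finset.Icc (T+1) K, (1 - P i) * q i
      = X T - ∑ i ∈ Finset.Icc (T+1) K, (1 / P i) * (X (i-1) - X i) := by
    intro T h1 h2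
    have h := aux_tele X T K h2
    have : ∑ i ∈ Finset.Icc (T+1) K, (1 - P i) * q i
      = ∑ i ∈ Finset.Icc (T+1) K, ((1 / P i) * (X (i-1) - X i) - (X (i-1) - X i)) := by
      refine Finset.sum_congr rfl fun i hi => ?_
      rw [Finset.mem_Icc] at hi
      have := hPpos i (by omega) hi.2
      rw [hq]; field_simp
    rw [this, Finset.sum_sub_distrib, h]; ring
  have he := Real.exp_one_gt_d9
  set E := Real.exp 1 with hE
  set N : ℝ := (m:ℝ)+1 with hN
  have hN2 : 2 ≤ N := by linarith
  obtain ⟨δ, hδ⟩ : ∃ δ : ℝ, δ = 1 / (4 * E * N) := ⟨_, rfl⟩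
  have hδ0 : 0 < δ := by rw [hδ]; positivity
  have hδN : 4 * E * (N * δ) = 1 := by rw [hδ]; field_simp
  have hℓδ : ℓ / K ≤ δ := by
    rw [hδ, div_le_div_iff₀ hK0 (by positivity)]; linarith
  have hNδ : N * δ < 0.1 := by nlinarith
  have hδs : δ < 0.05 := by nlinarith
  have hNinv : N * (1/N) = 1 := by field_simp
  have hNi2 : 1/N ≤ 1/2 := one_div_le_one_div_of_le (by norm_num) hN2
  -- main lower bound
  have hlow : 3 * δ ≤ P Tstar := by
    by_contra! hc
    have hpos := hPpos Tstar hT1 hT2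
    have hSpos : 0 < X Tstar - ∑ i ∈ Finset.Icc (Tstar+1) K, (1 / P i) * (X (i-1) - X i) := by
      rw [← hS Tstar hT1 hT2]
      rw [hr] at hT3
      have : 0 < 1 / (1 - P Tstar) := by
        apply one_div_pos.2; linarith
      exact (pos_iff_pos_of_mul_pos hT3).1 this
    have hex : ∃ k, 1 ≤ k ∧ k ≤ K ∧ 1/N < P k := ⟨K, by omega, le_rfl, by linarith⟩
    classical
    obtain ⟨k1, k2, k3⟩ := Nat.find_spec hex
    have hmin := fun j => Nat.find_min hex (m := j)
    set k := Nat.find hex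
    have h10 : 10 * δ < 1/N := by
      rw [lt_div_iff₀ (by linarith)]; nlinarith
    have hk : Tstar < k := by
      by_contra! h
      have := hPle k Tstar k1 h hT2
      linarith
    obtain ⟨c, hcdef⟩ : ∃ c, k = c + 1 := ⟨k - 1, by omega⟩
    have hc1 : P c ≤ 1/N := by
      by_contra! h
      exact hmin c (by omega) ⟨by omega, by omega, h⟩
    have hc2 : 1/N - δ ≤ P c := by
      have := hdense3 c (by omega) (by omega)
      rw [← hcdef] at this
      linarith
    have hcT : Tstar ≤ c := by omega
    have hcK : c ≤ K := by omega
    have hcpos := hPpos c (by omega) hcK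
    have hsum : (1 / P c) * (X Tstar - X c) ≤
        ∑ i ∈ Finset.Icc (Tstar+1) K, (1 / P i) * (X (i-1) - X i) := by
      rw [← aux_tele X Tstar c hcT, Finset.mul_sum]
      refine (Finset.sum_le_sum (fun i hi => ?_)).trans
        (Finset.sum_le_sum_of_subset_of_nonneg (Finset.Icc_subset_Icc_right hcK) (fun i hi _ => ?_))
      · rw [Finset.mem_Icc] at hi
        have h1 := hXanti (i-1) i (by omega) (by omega) (by omega)
        exact mul_le_mul_of_nonneg_right (one_div_le_one_div_of_le (hPpos i (by omega) (by omega))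
          (hPle i c (by omega) hi.2 hcK)) (by linarith)
      · rw [Finset.mem_Icc] at hi
        have h1 := hXanti (i-1) i (by omega) (by omega) (by omega)
        have := hPpos i (by omega) (by omega)
        exact mul_nonneg (by positivity) (by linarith)
    have hkey : X c ≤ (1 - P c) * X Tstar := by
      by_contra! h
      have hx := hXpos Tstar hT1 hT2
      have h1c : 0 ≤ 1 - P c := by linarith
      have h' := pow_lt_pow_left₀ h (by positivity) (by omega : m ≠ 0)
      rw [mul_pow, hXpow c (by omega) hcK, hXpow Tstar hT1 hT2, mul_one_div,
        div_lt_div_iff₀ hpos hcpos] at h'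
      have hexp := aux_exp m hm (P c) hc1
      have a1 : P c * 1 ≤ P c * (E * (1 - P c)^m) := mul_le_mul_of_nonneg_left hexp hcpos.le
      have a2 : E * ((1 - P c)^m * P c) < E * (1 * P Tstar) :=
        mul_lt_mul_of_pos_left h' (by linarith)
      have a3 : P c < E * (3 * δ) := by nlinarith
      have a4 : N * (1/N - δ) < N * (E * (3*δ)) := mul_lt_mul_of_pos_left (by linarith) (by linarith)
      nlinarith
    have : X Tstar ≤ (1 / P c) * (X Tstar - X c) := by
      rw [one_div, ← div_eq_inv_mul, le_div_iff₀ hcpos]; linarith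
    linarith
  have hT2' : 2 ≤ Tstar := by
    by_contra! h
    have : Tstar = 1 := by omega
    rw [this] at hlow; linarith
  obtain ⟨t, rfl⟩ : ∃ t, Tstar = t + 1 := ⟨Tstar - 1, by omega⟩
  rw [Nat.add_sub_cancel]
  have ht1 : 1 ≤ t := by omega
  have htK : t ≤ K := by omega
  constructor
  · have := hdense3 t ht1 (by omega)
    have e : 1 / (2 * E * N) = 2 * δ := by rw [hδ]; field_simp; norm_num
    rw [e]; linarith
  · have hpos := hPpos t ht1 htK
    have hlt := hPmono t K ht1 (by omega) le_rfl
    have hr0 := hT4 t ht1 (by omega)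
    rw [hr, hS t ht1 htK] at hr0
    have h1 : 0 < 1 / (1 - P t) := one_div_pos.2 (by linarith)
    have hle := nonpos_of_mul_nonpos_right hr0 h1
    have hsum : ∑ i ∈ Finset.Icc (t+1) K, (1 / P i) * (X (i-1) - X i) ≤
        ∑ i ∈ Finset.Icc (t+1) K, (X (i-1) ^ (m+1) / N - X i ^ (m+1) / N) := by
      refine Finset.sum_le_sum fun i hi => ?_
      rw [Finset.mem_Icc] at hi
      have h := aux_pow m (X (i-1)) (X i) (hXpos i (by omega) hi.2)
        (hXanti (i-1) i (by omega) (by omega) hi.2)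
      rw [← hXpow i (by omega) hi.2, ← sub_div, le_div_iff₀ (by linarith)]
      linarith
    rw [aux_tele (fun i => X i ^ (m+1) / N) t K htK] at hsum
    have hxK := hXpos K (by omega) le_rfl
    have hxt := hXpos t ht1 htK
    have h2 : 0 < X K ^ (m+1) / N := by positivity
    have h3 : X t < X t ^ (m+1) / N := by linarith
    rw [pow_succ, hXpow t ht1 htK, lt_div_iff₀ (by linarith)] at h3
    have h4 : N < 1 / P t := lt_of_mul_lt_mul_left (by linarith : X t * N < X t * (1 / P t)) hxt.le
    rw [lt_div_iff₀ (by linarith)]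
    rw [lt_div_iff₀ hpos] at h4
    linarith
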